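/- Suppose that the λ-gradient of log f is uniformly bounded, i.e. sup over (u, v) of ‖J(u) · h(v, θ(u)) / f(v, θ(u))‖_∞ < ∞, and that there exists p > 2 with E[|f(v,θ)/μ(θ)|^p] < ∞, where θ = θ(u) and (u, v) are distributed according to the outer and inner sampling distributions. Then E[‖J(u) · Δψ̃_{θ,ℓ}‖₂²] = O(2^{−rℓ}) as ℓ → ∞, with r = min(p/2, 2) ∈ (1, 2]. -/

import Mathlib

open MeasureTheory ProbabilityTheory

/-! Writing `aᵢ`, `bᵢ` for the sample means of `h` and `f` over the two halves, the correction is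
`(a₁ / b₁ - a₂ / b₂) * (b₁ - b₂) / (2 * (b₁ + b₂))`, a product of two fluctuations. Normalise to
`∫ f = 1` and `|h| ≤ f`, and let `x` be the largest deviation of the four sample means from their
expectations. For small `x` the correction is at most `(3 * x) ^ 2`, and the bound on `h / f`
keeps it below `1` in any case, however small `b₁` and `b₂` may be; so its square is at most
`(3 * x) ^ q` for every `q ≤ 4`. Sample means of size `N` converge in `L^q` at rate
`N ^ (-1 / 2)` for `q ≥ 2`, and `q = min p 4` yields the exponent `q / 2 = min (p / 2) 2`. -/

open scoped BigOperators Matrix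

section RealPowers

variable {q : ℝ}

/-- The constant of the quadratic remainder in the first-order expansion `abs_add_rpow_le` of
`|a + b| ^ q`. -/
noncomputable def taylorConst (q : ℝ) : ℝ := q ^ 2 * 2 ^ q

lemma taylorConst_nonneg (q : ℝ) : 0 ≤ taylorConst q := by
  unfold taylorConst
  positivity

lemma rpow_le_one_add_mul_rpow_sub_one {s u : ℝ} (hs : 1 ≤ s) (hu : 0 < u) :
    u ^ s ≤ 1 + s * (u - 1) * u ^ (s - 1) := by
  have bernoulli : 1 + s * (u⁻¹ - 1) ≤ u⁻¹ ^ s := by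
    simpa using one_add_mul_self_le_rpow_one_add (s := u⁻¹ - 1) (by linarith [inv_pos.2 hu]) hs
  have hmul := mul_le_mul_of_nonneg_left bernoulli (Real.rpow_nonneg hu.le s)
  rw [← Real.mul_rpow hu.le (inv_nonneg.2 hu.le), mul_inv_cancel₀ hu.ne', Real.one_rpow] at hmul
  have hsub : u ^ s * u⁻¹ = u ^ (s - 1) := by rw [Real.rpow_sub_one hu.ne', div_eq_mul_inv]
  have hsplit : u ^ s = u ^ (s - 1) * u := by rw [← hsub, inv_mul_cancel_right₀ hu.ne']
  have hexpand : u ^ s * (1 + s * (u⁻¹ - 1)) = u ^ s - s * (u - 1) * u ^ (s - 1) := by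
    linear_combination s * hsub - s * hsplit
  linarith

lemma one_add_rpow_le_of_abs_le_one (hq : 2 ≤ q) {x : ℝ} (hx : |x| ≤ 1) :
    (1 + x) ^ q ≤ 1 + q * x + taylorConst q * x ^ 2 := by
  obtain ⟨hx₁, hx₂⟩ := abs_le.1 hx
  have hC : q * (q - 1) * 2 ^ (q - 2) ≤ taylorConst q := by
    unfold taylorConst
    gcongr
    · nlinarith
    · norm_num
    · linarith
  rcases hx₁.eq_or_lt with rfl | hx₁
  · have hC' : q * (q - 1) ≤ q * (q - 1) * 2 ^ (q - 2) :=
      le_mul_of_one_le_right (by nlinarith) (Real.one_le_rpow (by norm_num) (by linarith))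
    rw [add_neg_cancel, Real.zero_rpow (by linarith)]
    nlinarith
  · have hu : 0 < 1 + x := by linarith
    have tangent := rpow_le_one_add_mul_rpow_sub_one (s := q) (by linarith) hu
    rw [add_sub_cancel_left] at tangent
    have hquad : x * ((1 + x) ^ (q - 1) - 1) ≤ (q - 1) * 2 ^ (q - 2) * x ^ 2 := by
      rcases le_total 0 x with h | h
      · have hupper := rpow_le_one_add_mul_rpow_sub_one (s := q - 1) (by linarith) hu
        rw [add_sub_cancel_left, sub_sub, one_add_one_eq_two] at hupper
        calc x * ((1 + x) ^ (q - 1) - 1) ≤ x * ((q - 1) * x * (1 + x) ^ (q - 2)) := by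
              gcongr; linarith
          _ = (q - 1) * (1 + x) ^ (q - 2) * x ^ 2 := by ring
          _ ≤ (q - 1) * 2 ^ (q - 2) * x ^ 2 := by gcongr <;> linarith
      · have hlower := one_add_mul_self_le_rpow_one_add hx₁.le (p := q - 1) (by linarith)
        calc x * ((1 + x) ^ (q - 1) - 1) ≤ x * ((q - 1) * x) :=
              mul_le_mul_of_nonpos_left (by linarith) h
          _ = (q - 1) * 1 * x ^ 2 := by ring
          _ ≤ (q - 1) * 2 ^ (q - 2) * x ^ 2 := by
              gcongr
              · linarith
              · exact Real.one_le_rpow (by norm_num) (by linarith)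
    nlinarith [mul_le_mul_of_nonneg_right hC (sq_nonneg x),
      mul_le_mul_of_nonneg_left hquad (show 0 ≤ q by linarith)]

lemma abs_one_add_rpow_le (hq : 2 ≤ q) (x : ℝ) :
    |1 + x| ^ q ≤ 1 + q * x + taylorConst q * (x ^ 2 + |x| ^ q) := by
  have hC := taylorConst_nonneg q
  rcases le_or_gt |x| 1 with hx | hx
  · rw [abs_of_nonneg (by linarith [neg_le_of_abs_le hx])]
    have := one_add_rpow_le_of_abs_le_one hq hx
    have : 0 ≤ taylorConst q * |x| ^ q := by positivity
    linarith
  · have hself : |x| ≤ |x| ^ q := Real.self_le_rpow_of_one_le hx.le (by linarith)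
    have hdom : |1 + x| ^ q ≤ 2 ^ q * |x| ^ q := by
      rw [← Real.mul_rpow zero_le_two (abs_nonneg x)]
      gcongr
      calc |1 + x| ≤ |1| + |x| := abs_add_le 1 x
        _ ≤ 2 * |x| := by rw [abs_one]; linarith
    have hlin : -(q * |x| ^ q) ≤ q * x := by nlinarith [neg_abs_le x]
    have hC' : 2 ^ q + q ≤ taylorConst q := by
      have bernoulli : 1 + q * 1 ≤ (1 + 1) ^ q :=
        one_add_mul_self_le_rpow_one_add (by norm_num) (by linarith)
      have hsq : 4 * 2 ^ q ≤ taylorConst q := by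
        unfold taylorConst
        gcongr
        nlinarith
      norm_num at bernoulli
      linarith
    nlinarith [mul_le_mul_of_nonneg_right hC' (Real.rpow_nonneg (abs_nonneg x) q),
      mul_nonneg hC (sq_nonneg x)]

lemma abs_rpow_sub_two_mul_sq (hq : q ≠ 0) (a : ℝ) : |a| ^ (q - 2) * a ^ 2 = |a| ^ q := by
  rw [← sq_abs a, ← Real.rpow_natCast, ← Real.rpow_add' (abs_nonneg a) (by simpa using hq)]
  norm_num

lemma abs_add_rpow_le (hq : 2 ≤ q) (a b : ℝ) :
    |a + b| ^ q ≤ |a| ^ q + q * (|a| ^ (q - 2) * a * b) +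
      taylorConst q * (|a| ^ (q - 2) * b ^ 2 + |b| ^ q) := by
  have hq₀ : q ≠ 0 := by linarith
  rcases eq_or_ne a 0 with rfl | ha
  · have hC : 1 ≤ taylorConst q := by
      unfold taylorConst
      nlinarith [Real.one_le_rpow one_le_two (show 0 ≤ q by linarith)]
    have hb : 0 ≤ |b| ^ q := by positivity
    have hb₂ : 0 ≤ taylorConst q * (|(0 : ℝ)| ^ (q - 2) * b ^ 2) :=
      mul_nonneg (by linarith) (by positivity)
    simp only [zero_add, abs_zero, Real.zero_rpow hq₀, mul_zero, zero_mul] at hb₂ ⊢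
    nlinarith
  · have hscale (c : ℝ) : |a| ^ q * |c / a| ^ q = |c| ^ q := by
      rw [← Real.mul_rpow (abs_nonneg a) (abs_nonneg _), ← abs_mul, mul_div_cancel₀ c ha]
    calc |a + b| ^ q = |a| ^ q * |1 + b / a| ^ q := by
          rw [← hscale, add_div, div_self ha]
      _ ≤ |a| ^ q * (1 + q * (b / a) + taylorConst q * ((b / a) ^ 2 + |b / a| ^ q)) := by
          gcongr
          exact abs_one_add_rpow_le hq _
      _ = |a| ^ q + q * (|a| ^ q * (b / a)) +
            taylorConst q * (|a| ^ q * (b / a) ^ 2 + |a| ^ q * |b / a| ^ q) := by ring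
      _ = |a| ^ q + q * (|a| ^ (q - 2) * a * b) +
            taylorConst q * (|a| ^ (q - 2) * b ^ 2 + |b| ^ q) := by
          rw [hscale, ← abs_rpow_sub_two_mul_sq hq₀ a]
          field_simp

lemma abs_rpow_sub_two_mul_sq_le (hq : 2 ≤ q) (a b : ℝ) {n : ℝ} (hn : 0 < n) :
    |a| ^ (q - 2) * b ^ 2 ≤ n⁻¹ * |a| ^ q + n ^ ((q - 2) / 2) * |b| ^ q := by
  have hq₀ : q ≠ 0 := by linarith
  rcases le_total (n * b ^ 2) (a ^ 2) with h | h
  · have hb : b ^ 2 ≤ n⁻¹ * a ^ 2 := by rwa [le_inv_mul_iff₀ hn]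
    calc |a| ^ (q - 2) * b ^ 2 ≤ |a| ^ (q - 2) * (n⁻¹ * a ^ 2) := by gcongr
      _ = n⁻¹ * |a| ^ q := by rw [← abs_rpow_sub_two_mul_sq hq₀ a]; ring
      _ ≤ n⁻¹ * |a| ^ q + n ^ ((q - 2) / 2) * |b| ^ q :=
          le_add_of_nonneg_right (by positivity)
  · have hsq (c : ℝ) : |c| ^ (q - 2) = (c ^ 2) ^ ((q - 2) / 2) := by
      rw [← sq_abs c, ← Real.rpow_two, ← Real.rpow_mul (abs_nonneg c),
        mul_div_cancel₀ _ two_ne_zero]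
    have ha : |a| ^ (q - 2) ≤ n ^ ((q - 2) / 2) * |b| ^ (q - 2) := by
      rw [hsq a, hsq b, ← Real.mul_rpow hn.le (sq_nonneg b)]
      exact Real.rpow_le_rpow (sq_nonneg a) h (by linarith)
    calc |a| ^ (q - 2) * b ^ 2 ≤ n ^ ((q - 2) / 2) * |b| ^ (q - 2) * b ^ 2 := by gcongr
      _ = n ^ ((q - 2) / 2) * |b| ^ q := by rw [← abs_rpow_sub_two_mul_sq hq₀ b]; ring
      _ ≤ n⁻¹ * |a| ^ q + n ^ ((q - 2) / 2) * |b| ^ q :=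
          le_add_of_nonneg_left (by positivity)

lemma abs_sub_rpow_le (hq : 0 ≤ q) (a b : ℝ) :
    |a - b| ^ q ≤ 2 ^ q * (|a| ^ q + |b| ^ q) := by
  calc |a - b| ^ q ≤ (2 * max |a| |b|) ^ q := by
        gcongr
        calc |a - b| ≤ |a| + |b| := abs_sub a b
          _ ≤ 2 * max |a| |b| := by
            linarith [le_max_left |a| |b|, le_max_right |a| |b|]
    _ = 2 ^ q * max (|a| ^ q) (|b| ^ q) := by
        rw [Real.mul_rpow zero_le_two (by positivity),
          Real.rpow_max (abs_nonneg a) (abs_nonneg b) hq]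
    _ ≤ 2 ^ q * (|a| ^ q + |b| ^ q) := by
        gcongr
        exact max_le_add_of_nonneg (by positivity) (by positivity)

lemma rpow_le_one_add_rpow {p x : ℝ} (hq : 0 ≤ q) (hqp : q ≤ p) (hx : 0 ≤ x) :
    x ^ q ≤ 1 + x ^ p := by
  rcases le_total x 1 with h | h
  · linarith [Real.rpow_le_one hx h hq, Real.rpow_nonneg hx p]
  · linarith [Real.rpow_le_rpow_of_exponent_le h hqp]

end RealPowers

section Moments

/-- The constant of the moment inequality `integral_abs_sum_rpow_le` for sums of independent
centred random variables. -/
noncomputable def sumMomentConst (q : ℝ) : ℝ := 2 * taylorConst q * Real.exp (taylorConst q)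

lemma sumMomentConst_nonneg (q : ℝ) : 0 ≤ sumMomentConst q :=
  mul_nonneg (mul_nonneg zero_le_two (taylorConst_nonneg q)) (Real.exp_nonneg _)

variable {Ω : Type*} [MeasurableSpace Ω] {P : Measure Ω} {q : ℝ}

lemma memLp_ofReal_iff_integrable_abs_rpow (hq : 0 < q) {X : Ω → ℝ}
    (hX : AEStronglyMeasurable X P) :
    MemLp X (ENNReal.ofReal q) P ↔ Integrable (fun ω => |X ω| ^ q) P := by
  rw [← integrable_norm_rpow_iff hX (ENNReal.ofReal_pos.2 hq).ne' ENNReal.ofReal_ne_top,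
    ENNReal.toReal_ofReal hq.le]
  rfl

lemma integrable_abs_rpow_of_memLp (hq : 0 < q) {X : Ω → ℝ}
    (hX : MemLp X (ENNReal.ofReal q) P) : Integrable (fun ω => |X ω| ^ q) P :=
  (memLp_ofReal_iff_integrable_abs_rpow hq hX.1).1 hX

lemma integrable_of_memLp_ofReal [IsFiniteMeasure P] (hq : 1 ≤ q) {X : Ω → ℝ}
    (hX : MemLp X (ENNReal.ofReal q) P) : Integrable X P :=
  hX.integrable (ENNReal.one_le_ofReal.2 hq)

lemma integral_abs_rpow_le_one_add [IsProbabilityMeasure P] (hq : 0 ≤ q) {p : ℝ} (hqp : q ≤ p)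
    {X : Ω → ℝ} (hX : Integrable (fun ω => |X ω| ^ p) P) :
    ∫ ω, |X ω| ^ q ∂P ≤ 1 + ∫ ω, |X ω| ^ p ∂P :=
  calc ∫ ω, |X ω| ^ q ∂P ≤ ∫ ω, (1 + |X ω| ^ p) ∂P :=
        integral_mono_of_nonneg (.of_forall fun ω => by positivity)
          ((integrable_const 1).add hX)
          (.of_forall fun ω => rpow_le_one_add_rpow hq hqp (abs_nonneg _))
    _ = 1 + ∫ ω, |X ω| ^ p ∂P := by
        rw [integral_add (integrable_const 1) hX, integral_const, probReal_univ, one_smul]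

lemma integrable_abs_rpow_sub_two_mul [IsFiniteMeasure P] (hq : 2 ≤ q) {X : Ω → ℝ}
    (hX : MemLp X (ENNReal.ofReal q) P) : Integrable (fun ω => |X ω| ^ (q - 2) * X ω) P := by
  have hX' : MemLp X (ENNReal.ofReal (q - 1)) P :=
    hX.mono_exponent (ENNReal.ofReal_le_ofReal (by linarith))
  have hmeas : AEMeasurable X P := hX.1.aemeasurable
  refine (integrable_abs_rpow_of_memLp (by linarith) hX').mono'
    (by fun_prop : AEMeasurable (fun ω => |X ω| ^ (q - 2) * X ω) P).aestronglyMeasurable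
    (.of_forall fun ω => le_of_eq ?_)
  rw [Real.norm_eq_abs, abs_mul, abs_of_nonneg (by positivity : 0 ≤ |X ω| ^ (q - 2)),
    ← Real.rpow_add_one' (abs_nonneg _) (by linarith)]
  ring_nf

-- Choosing for `n` the number of summands keeps the factors `1 + taylorConst q / n` of an induction
-- bounded by `exp (taylorConst q)` in total.
lemma integral_abs_add_rpow_le [IsFiniteMeasure P] (hq : 2 ≤ q) {X Y : Ω → ℝ}
    (hX : MemLp X (ENNReal.ofReal q) P) (hY : MemLp Y (ENNReal.ofReal q) P)
    (hXY : IndepFun X Y P) (hmean : ∫ ω, Y ω ∂P = 0) {n : ℝ} (hn : 1 ≤ n) :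
    ∫ ω, |X ω + Y ω| ^ q ∂P ≤ (1 + taylorConst q / n) * ∫ ω, |X ω| ^ q ∂P +
      2 * taylorConst q * n ^ ((q - 2) / 2) * ∫ ω, |Y ω| ^ q ∂P := by
  set C := taylorConst q
  have hq₀ : 0 < q := by linarith
  have hXq := integrable_abs_rpow_of_memLp hq₀ hX
  have hYq := integrable_abs_rpow_of_memLp hq₀ hY
  have hX' := integrable_abs_rpow_sub_two_mul hq hX
  have hY' := integrable_of_memLp_ofReal (by linarith) hY
  have hindep : IndepFun (fun ω => |X ω| ^ (q - 2) * X ω) Y P :=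
    hXY.comp (φ := fun x : ℝ => |x| ^ (q - 2) * x) (by fun_prop) measurable_id
  have hcross : ∫ ω, |X ω| ^ (q - 2) * X ω * Y ω ∂P = 0 := by
    rw [hindep.integral_fun_mul_eq_mul_integral hX'.1 hY'.1, hmean, mul_zero]
  have hcrossI : Integrable (fun ω => |X ω| ^ (q - 2) * X ω * Y ω) P :=
    hindep.integrable_mul hX' hY'
  have hpointwise (ω : Ω) : |X ω + Y ω| ^ q ≤ (1 + C / n) * |X ω| ^ q +
      q * (|X ω| ^ (q - 2) * X ω * Y ω) + 2 * C * n ^ ((q - 2) / 2) * |Y ω| ^ q := by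
    have taylor := abs_add_rpow_le hq (X ω) (Y ω)
    have young := mul_le_mul_of_nonneg_left
      (abs_rpow_sub_two_mul_sq_le hq (X ω) (Y ω) (zero_lt_one.trans_le hn)) (taylorConst_nonneg q)
    have hpow : C * |Y ω| ^ q ≤ C * (n ^ ((q - 2) / 2) * |Y ω| ^ q) :=
      mul_le_mul_of_nonneg_left (le_mul_of_one_le_left (by positivity)
        (Real.one_le_rpow hn (by linarith))) (taylorConst_nonneg q)
    rw [div_eq_mul_inv]
    linarith
  have hmain : Integrable (fun ω => (1 + C / n) * |X ω| ^ q +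
      q * (|X ω| ^ (q - 2) * X ω * Y ω)) P := (hXq.const_mul _).add (hcrossI.const_mul q)
  calc ∫ ω, |X ω + Y ω| ^ q ∂P
      ≤ ∫ ω, ((1 + C / n) * |X ω| ^ q + q * (|X ω| ^ (q - 2) * X ω * Y ω) +
          2 * C * n ^ ((q - 2) / 2) * |Y ω| ^ q) ∂P :=
        integral_mono (integrable_abs_rpow_of_memLp hq₀ (hX.add hY))
          (hmain.add (hYq.const_mul _)) hpointwise
    _ = (1 + C / n) * ∫ ω, |X ω| ^ q ∂P +
          2 * C * n ^ ((q - 2) / 2) * ∫ ω, |Y ω| ^ q ∂P := by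
        rw [integral_add hmain (hYq.const_mul _),
          integral_add (hXq.const_mul _) (hcrossI.const_mul q), integral_const_mul,
          integral_const_mul, integral_const_mul, hcross, mul_zero, add_zero]

variable {ι : Type*} {X : ι → Ω → ℝ}

lemma integral_abs_sum_rpow_le_pow_card_mul (hq : 2 ≤ q)
    (hX : ∀ i, MemLp (X i) (ENNReal.ofReal q) P) (hindep : iIndepFun X P)
    (hmean : ∀ i, ∫ ω, X i ω ∂P = 0) {n : ℝ} (hn : 1 ≤ n) (s : Finset ι) :
    ∫ ω, |∑ i ∈ s, X i ω| ^ q ∂P ≤ (1 + taylorConst q / n) ^ s.card *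
      (2 * taylorConst q * n ^ ((q - 2) / 2) * ∑ i ∈ s, ∫ ω, |X i ω| ^ q ∂P) := by
  classical
  have := hindep.isProbabilityMeasure
  have hC := taylorConst_nonneg q
  induction s using Finset.induction_on with
  | empty => simp [Real.zero_rpow (show q ≠ 0 by linarith)]
  | insert i s hi ih =>
    have hD : 0 ≤ 2 * taylorConst q * n ^ ((q - 2) / 2) := by positivity
    set r := 1 + taylorConst q / n
    set D := 2 * taylorConst q * n ^ ((q - 2) / 2)
    have hr : 1 ≤ r := le_add_of_nonneg_right (by positivity)
    have hindep' : IndepFun (fun ω => ∑ j ∈ s, X j ω) (X i) P := by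
      simpa only [Finset.sum_fn] using
        hindep.indepFun_finsetSum_of_notMem₀ (fun j => (hX j).1.aemeasurable) hi
    have hXi : 0 ≤ ∫ ω, |X i ω| ^ q ∂P := integral_nonneg fun ω => by positivity
    simp only [Finset.sum_insert hi, Finset.card_insert_of_notMem hi, add_comm (X i _)]
    calc ∫ ω, |∑ j ∈ s, X j ω + X i ω| ^ q ∂P
        ≤ r * ∫ ω, |∑ j ∈ s, X j ω| ^ q ∂P + D * ∫ ω, |X i ω| ^ q ∂P :=
          integral_abs_add_rpow_le hq (memLp_finsetSum s fun j _ => hX j) (hX i) hindep'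
            (hmean i) hn
      _ ≤ r * (r ^ s.card * (D * ∑ j ∈ s, ∫ ω, |X j ω| ^ q ∂P)) +
            r ^ (s.card + 1) * (D * ∫ ω, |X i ω| ^ q ∂P) := by
          exact add_le_add (mul_le_mul_of_nonneg_left ih (by linarith))
            (le_mul_of_one_le_left (mul_nonneg hD hXi) (one_le_pow₀ hr))
      _ = r ^ (s.card + 1) * (D * (∫ ω, |X i ω| ^ q ∂P + ∑ j ∈ s, ∫ ω, |X j ω| ^ q ∂P)) := by
          ring

/-- The Dharmadhikari–Jogdeo inequality. -/
lemma integral_abs_sum_rpow_le (hq : 2 ≤ q)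
    (hX : ∀ i, MemLp (X i) (ENNReal.ofReal q) P) (hindep : iIndepFun X P)
    (hmean : ∀ i, ∫ ω, X i ω ∂P = 0) (s : Finset ι) :
    ∫ ω, |∑ i ∈ s, X i ω| ^ q ∂P ≤
      sumMomentConst q * (s.card : ℝ) ^ ((q - 2) / 2) * ∑ i ∈ s, ∫ ω, |X i ω| ^ q ∂P := by
  rcases s.eq_empty_or_nonempty with rfl | hs
  · simp [Real.zero_rpow (show q ≠ 0 by linarith)]
  have hcard : (1 : ℝ) ≤ s.card := by exact_mod_cast hs.card_pos
  have hexp : (1 + taylorConst q / s.card) ^ s.card ≤ Real.exp (taylorConst q) := by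
    have hC := taylorConst_nonneg q
    calc (1 + taylorConst q / s.card) ^ s.card ≤ Real.exp (taylorConst q / s.card) ^ s.card := by
          gcongr
          rw [add_comm]
          exact Real.add_one_le_exp _
      _ = Real.exp (taylorConst q) := by
          rw [← Real.exp_nat_mul, mul_div_cancel₀ _ (by positivity)]
  have hC := taylorConst_nonneg q
  calc ∫ ω, |∑ i ∈ s, X i ω| ^ q ∂P
      ≤ (1 + taylorConst q / s.card) ^ s.card * (2 * taylorConst q *
          (s.card : ℝ) ^ ((q - 2) / 2) * ∑ i ∈ s, ∫ ω, |X i ω| ^ q ∂P) :=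
        integral_abs_sum_rpow_le_pow_card_mul hq hX hindep hmean hcard s
    _ ≤ Real.exp (taylorConst q) * (2 * taylorConst q *
          (s.card : ℝ) ^ ((q - 2) / 2) * ∑ i ∈ s, ∫ ω, |X i ω| ^ q ∂P) := by gcongr
    _ = sumMomentConst q * (s.card : ℝ) ^ ((q - 2) / 2) * ∑ i ∈ s, ∫ ω, |X i ω| ^ q ∂P := by
        unfold sumMomentConst
        ring

end Moments

section SampleMean

/-- The constant of the `L^q` rate of convergence `integral_abs_expect_sub_integral_rpow_le` of
sample means. -/
noncomputable def sampleMeanConst (q : ℝ) : ℝ := 2 * 2 ^ q * sumMomentConst q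

lemma sampleMeanConst_nonneg (q : ℝ) : 0 ≤ sampleMeanConst q :=
  mul_nonneg (by positivity) (sumMomentConst_nonneg q)

variable {V : Type*} [MeasurableSpace V] {μ : Measure V} [IsProbabilityMeasure μ] {q : ℝ}
  {φ : V → ℝ}

lemma abs_integral_rpow_le (hq : 1 ≤ q) (hφ : MemLp φ (ENNReal.ofReal q) μ) :
    |∫ v, φ v ∂μ| ^ q ≤ ∫ v, |φ v| ^ q ∂μ :=
  calc |∫ v, φ v ∂μ| ^ q ≤ (∫ v, |φ v| ∂μ) ^ q := by
        gcongr
        exact abs_integral_le_integral_abs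
    _ ≤ ∫ v, |φ v| ^ q ∂μ :=
        (convexOn_rpow hq).map_integral_le (Real.continuous_rpow_const (by linarith)).continuousOn
          isClosed_Ici (.of_forall fun v => abs_nonneg (φ v))
          (integrable_of_memLp_ofReal hq hφ).abs
          (integrable_abs_rpow_of_memLp (by linarith) hφ)

lemma integral_abs_sub_integral_rpow_le (hq : 1 ≤ q) (hφ : MemLp φ (ENNReal.ofReal q) μ) :
    ∫ v, |φ v - ∫ x, φ x ∂μ| ^ q ∂μ ≤ 2 * 2 ^ q * ∫ v, |φ v| ^ q ∂μ := by
  have hq₀ : 0 < q := by linarith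
  have hφq := integrable_abs_rpow_of_memLp hq₀ hφ
  set ρ := ∫ x, φ x ∂μ
  calc ∫ v, |φ v - ρ| ^ q ∂μ ≤ ∫ v, 2 ^ q * (|φ v| ^ q + |ρ| ^ q) ∂μ :=
        integral_mono (integrable_abs_rpow_of_memLp hq₀ (hφ.sub (memLp_const ρ)))
          ((hφq.add (integrable_const _)).const_mul _) fun v => abs_sub_rpow_le hq₀.le _ _
    _ = 2 ^ q * (∫ v, |φ v| ^ q ∂μ + |ρ| ^ q) := by
        rw [integral_const_mul, integral_add hφq (integrable_const _), integral_const,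
          probReal_univ, one_smul]
    _ ≤ 2 ^ q * (∫ v, |φ v| ^ q ∂μ + ∫ v, |φ v| ^ q ∂μ) := by
        gcongr
        exact abs_integral_rpow_le hq hφ
    _ = 2 * 2 ^ q * ∫ v, |φ v| ^ q ∂μ := by ring

variable {ι : Type*} {s : Finset ι}

lemma expect_sub_eq_inv_mul_sum_sub (hs : s.Nonempty) (x : ι → ℝ) (c : ℝ) :
    (𝔼 i ∈ s, x i) - c = (s.card : ℝ)⁻¹ * ∑ i ∈ s, (x i - c) := by
  have hcard : (s.card : ℝ) ≠ 0 := by exact_mod_cast hs.card_pos.ne'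
  rw [Finset.expect_eq_sum_div_card, Finset.sum_sub_distrib, Finset.sum_const, nsmul_eq_mul]
  field_simp

variable [Fintype ι]

lemma memLp_expect (hφ : MemLp φ (ENNReal.ofReal q) μ) (s : Finset ι) :
    MemLp (fun v : ι → V => 𝔼 i ∈ s, φ (v i)) (ENNReal.ofReal q) (Measure.pi fun _ => μ) := by
  simp only [Finset.expect_eq_sum_div_card, div_eq_inv_mul]
  exact (memLp_finsetSum s fun i _ =>
    hφ.comp_measurePreserving (measurePreserving_eval (fun _ => μ) i)).const_mul _

lemma integrable_abs_expect_sub_rpow (hq : 0 < q) (hφ : MemLp φ (ENNReal.ofReal q) μ)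
    (s : Finset ι) (c : ℝ) :
    Integrable (fun v : ι → V => |(𝔼 i ∈ s, φ (v i)) - c| ^ q) (Measure.pi fun _ => μ) :=
  integrable_abs_rpow_of_memLp hq ((memLp_expect hφ s).sub (memLp_const c))

lemma integral_abs_expect_sub_integral_rpow_le (hq : 2 ≤ q) (hφ : MemLp φ (ENNReal.ofReal q) μ)
    (hs : s.Nonempty) :
    ∫ v : ι → V, |(𝔼 i ∈ s, φ (v i)) - ∫ x, φ x ∂μ| ^ q ∂(Measure.pi fun _ => μ) ≤
      sampleMeanConst q * (s.card : ℝ) ^ (-(q / 2)) * ∫ x, |φ x| ^ q ∂μ := by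
  set ρ := ∫ x, φ x ∂μ with hρ
  set n : ℝ := (s.card : ℝ) with hn
  have hn₀ : 0 < n := by simpa [hn] using hs
  have hC := sumMomentConst_nonneg q
  have hψ : MemLp (fun x => φ x - ρ) (ENNReal.ofReal q) μ := hφ.sub (memLp_const ρ)
  have hψ_mean : ∫ x, (φ x - ρ) ∂μ = 0 := by
    rw [integral_sub (integrable_of_memLp_ofReal (by linarith) hφ) (integrable_const ρ)]
    simp [hρ]
  have hψ_moment : AEStronglyMeasurable (fun x => |φ x - ρ| ^ q) μ :=
    (integrable_abs_rpow_of_memLp (by linarith) hψ).1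
  have hsum := integral_abs_sum_rpow_le hq
    (fun i => hψ.comp_measurePreserving (measurePreserving_eval (fun _ : ι => μ) i))
    (iIndepFun_pi (X := fun _ x => φ x - ρ) fun _ => hψ.1.aemeasurable)
    (fun i => (integral_comp_eval (μ := fun _ : ι => μ) hψ.1).trans hψ_mean) s
  simp only [Function.comp_apply, Function.eval,
    integral_comp_eval (μ := fun _ : ι => μ) hψ_moment, Finset.sum_const, nsmul_eq_mul] at hsum
  have hpow : n ^ (-q) * (n ^ ((q - 2) / 2) * n) = n ^ (-(q / 2)) := by
    rw [← Real.rpow_add_one hn₀.ne', ← Real.rpow_add hn₀]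
    ring_nf
  calc ∫ v : ι → V, |(𝔼 i ∈ s, φ (v i)) - ρ| ^ q ∂(Measure.pi fun _ => μ)
      = n ^ (-q) * ∫ v : ι → V, |∑ i ∈ s, (φ (v i) - ρ)| ^ q ∂(Measure.pi fun _ => μ) := by
        rw [← integral_const_mul]
        congr with v
        rw [expect_sub_eq_inv_mul_sum_sub hs, abs_mul, abs_of_pos (inv_pos.2 hn₀),
          Real.mul_rpow (inv_nonneg.2 hn₀.le) (abs_nonneg _), Real.inv_rpow hn₀.le,
          Real.rpow_neg hn₀.le]
    _ ≤ n ^ (-q) * (sumMomentConst q * n ^ ((q - 2) / 2) *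
          (n * (2 * 2 ^ q * ∫ x, |φ x| ^ q ∂μ))) := by
        refine mul_le_mul_of_nonneg_left (hsum.trans ?_) (by positivity)
        gcongr
        exact integral_abs_sub_integral_rpow_le (by linarith) hφ
    _ = sampleMeanConst q * n ^ (-(q / 2)) * ∫ x, |φ x| ^ q ∂μ := by
        rw [← hpow, sampleMeanConst]
        ring

end SampleMean

section Antithetic

lemma antithetic_eq (a₁ a₂ : ℝ) {b₁ b₂ : ℝ} (hb₁ : 0 < b₁) (hb₂ : 0 < b₂) :
    (a₁ + a₂) / (b₁ + b₂) - 1 / 2 * (a₁ / b₁ + a₂ / b₂) =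
      (a₁ / b₁ - a₂ / b₂) * (b₁ - b₂) / (2 * (b₁ + b₂)) := by
  field_simp
  ring

lemma abs_antithetic (a₁ a₂ : ℝ) {b₁ b₂ : ℝ} (hb₁ : 0 < b₁) (hb₂ : 0 < b₂) :
    |(a₁ + a₂) / (b₁ + b₂) - 1 / 2 * (a₁ / b₁ + a₂ / b₂)| =
      |a₁ / b₁ - a₂ / b₂| * |b₁ - b₂| / (2 * (b₁ + b₂)) := by
  rw [antithetic_eq a₁ a₂ hb₁ hb₂, abs_div, abs_mul,
    abs_of_pos (by linarith : 0 < 2 * (b₁ + b₂))]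

variable {a₁ a₂ b₁ b₂ ρ x q : ℝ}

lemma abs_antithetic_le_one (hb₁ : 0 < b₁) (hb₂ : 0 < b₂) (ha₁ : |a₁| ≤ b₁) (ha₂ : |a₂| ≤ b₂) :
    |(a₁ + a₂) / (b₁ + b₂) - 1 / 2 * (a₁ / b₁ + a₂ / b₂)| ≤ 1 := by
  have hratio {a b : ℝ} (hb : 0 < b) (ha : |a| ≤ b) : |a / b| ≤ 1 := by
    rwa [abs_div, abs_of_pos hb, div_le_one hb]
  have hr : |a₁ / b₁ - a₂ / b₂| ≤ 2 := by
    linarith [abs_sub (a₁ / b₁) (a₂ / b₂), hratio hb₁ ha₁, hratio hb₂ ha₂]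
  have hb : |b₁ - b₂| ≤ b₁ + b₂ := abs_le.2 ⟨by linarith, by linarith⟩
  rw [abs_antithetic a₁ a₂ hb₁ hb₂, div_le_one (by linarith)]
  gcongr

lemma abs_div_sub_le (hρ : |ρ| ≤ 1) (ha : |a₁ - ρ| ≤ x) (hb : |b₁ - 1| ≤ x) (hx : x ≤ 1 / 3) :
    |a₁ / b₁ - ρ| ≤ 3 * x := by
  have hb₁ : 2 / 3 ≤ b₁ := by linarith [(abs_le.1 hb).1]
  have hnum : |a₁ - b₁ * ρ| ≤ 2 * x :=
    calc |a₁ - b₁ * ρ| = |(a₁ - ρ) - (b₁ - 1) * ρ| := by ring_nf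
      _ ≤ |a₁ - ρ| + |b₁ - 1| * |ρ| := by rw [← abs_mul]; exact abs_sub _ _
      _ ≤ x + x * 1 := by gcongr; exact (abs_nonneg _).trans hb
      _ = 2 * x := by ring
  have hx₀ : 0 ≤ x := (abs_nonneg _).trans hb
  rw [div_sub' (by linarith), abs_div, abs_of_pos (by linarith : 0 < b₁), div_le_iff₀ (by linarith)]
  nlinarith

lemma abs_antithetic_le_sq (hρ : |ρ| ≤ 1) (ha₁ : |a₁ - ρ| ≤ x) (ha₂ : |a₂ - ρ| ≤ x)
    (hb₁ : |b₁ - 1| ≤ x) (hb₂ : |b₂ - 1| ≤ x) (hx : x ≤ 1 / 3) :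
    |(a₁ + a₂) / (b₁ + b₂) - 1 / 2 * (a₁ / b₁ + a₂ / b₂)| ≤ (3 * x) ^ 2 := by
  have hb₁' : 2 / 3 ≤ b₁ := by linarith [(abs_le.1 hb₁).1]
  have hb₂' : 2 / 3 ≤ b₂ := by linarith [(abs_le.1 hb₂).1]
  have hx₀ : 0 ≤ x := (abs_nonneg _).trans hb₁
  have hr : |a₁ / b₁ - a₂ / b₂| ≤ 6 * x := by
    rw [← sub_sub_sub_cancel_right _ _ ρ]
    linarith [abs_sub (a₁ / b₁ - ρ) (a₂ / b₂ - ρ), abs_div_sub_le hρ ha₁ hb₁ hx,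
      abs_div_sub_le hρ ha₂ hb₂ hx]
  have hb : |b₁ - b₂| ≤ 2 * x := by
    rw [← sub_sub_sub_cancel_right _ _ 1]
    linarith [abs_sub (b₁ - 1) (b₂ - 1)]
  rw [abs_antithetic a₁ a₂ (by linarith) (by linarith), div_le_iff₀ (by linarith)]
  calc |a₁ / b₁ - a₂ / b₂| * |b₁ - b₂| ≤ 6 * x * (2 * x) := by gcongr
    _ ≤ (3 * x) ^ 2 * (2 * (b₁ + b₂)) := by nlinarith [sq_nonneg x]

lemma sq_antithetic_le_rpow (hq₀ : 0 ≤ q) (hq : q ≤ 4) (hb₁ : 0 < b₁) (hb₂ : 0 < b₂)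
    (ha₁ : |a₁| ≤ b₁) (ha₂ : |a₂| ≤ b₂) (hρ : |ρ| ≤ 1) (ha₁x : |a₁ - ρ| ≤ x)
    (ha₂x : |a₂ - ρ| ≤ x) (hb₁x : |b₁ - 1| ≤ x) (hb₂x : |b₂ - 1| ≤ x) :
    ((a₁ + a₂) / (b₁ + b₂) - 1 / 2 * (a₁ / b₁ + a₂ / b₂)) ^ 2 ≤ (3 * x) ^ q := by
  have hx₀ : 0 ≤ x := (abs_nonneg _).trans hb₁x
  rw [← sq_abs]
  rcases le_total x (1 / 3) with hx | hx
  · calc _ ≤ ((3 * x) ^ 2) ^ 2 := by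
          gcongr
          exact abs_antithetic_le_sq hρ ha₁x ha₂x hb₁x hb₂x hx
      _ = (3 * x) ^ (4 : ℝ) := by rw [← pow_mul]; norm_cast
      _ ≤ (3 * x) ^ q :=
          Real.rpow_le_rpow_of_exponent_ge' (by positivity) (by linarith) hq₀ hq
  · calc _ ≤ (1 : ℝ) ^ 2 := by
          gcongr
          exact abs_antithetic_le_one hb₁ hb₂ ha₁ ha₂
      _ = 1 := one_pow 2
      _ ≤ (3 * x) ^ q := Real.one_le_rpow (by linarith) hq₀

lemma sq_antithetic_le_sum_rpow (hq₀ : 0 ≤ q) (hq : q ≤ 4) (hb₁ : 0 < b₁) (hb₂ : 0 < b₂)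
    (ha₁ : |a₁| ≤ b₁) (ha₂ : |a₂| ≤ b₂) (hρ : |ρ| ≤ 1) :
    ((a₁ + a₂) / (b₁ + b₂) - 1 / 2 * (a₁ / b₁ + a₂ / b₂)) ^ 2 ≤
      3 ^ q * ((|a₁ - ρ| ^ q + |a₂ - ρ| ^ q) + (|b₁ - 1| ^ q + |b₂ - 1| ^ q)) := by
  have hmax {y z : ℝ} (hy : 0 ≤ y) (hz : 0 ≤ z) : max y z ^ q ≤ y ^ q + z ^ q :=
    (Real.rpow_max hy hz hq₀).trans_le
      (max_le_add_of_nonneg (Real.rpow_nonneg hy q) (Real.rpow_nonneg hz q))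
  set x := max (max |a₁ - ρ| |a₂ - ρ|) (max |b₁ - 1| |b₂ - 1|) with hx
  calc _ ≤ (3 * x) ^ q := by
        apply sq_antithetic_le_rpow hq₀ hq hb₁ hb₂ ha₁ ha₂ hρ <;> simp [hx]
    _ = 3 ^ q * x ^ q := Real.mul_rpow (by norm_num) (by positivity)
    _ ≤ 3 ^ q * (max |a₁ - ρ| |a₂ - ρ| ^ q + max |b₁ - 1| |b₂ - 1| ^ q) := by
        gcongr
        exact hmax (by positivity) (by positivity)
    _ ≤ 3 ^ q * ((|a₁ - ρ| ^ q + |a₂ - ρ| ^ q) + (|b₁ - 1| ^ q + |b₂ - 1| ^ q)) := by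
        gcongr <;> exact hmax (abs_nonneg _) (abs_nonneg _)

end Antithetic

section AntitheticCorrection

variable {V ι E F : Type*} [AddCommGroup E] [Module ℝ E] [AddCommGroup F] [Module ℝ F]

/-- The estimator `ψ̃`: the ratio of the sums of `h` and of `f` over the subsample `s` of `v`. -/
noncomputable def ratioEstimator (f : V → ℝ) (h : V → E) (s : Finset ι) (v : ι → V) : E :=
  (∑ i ∈ s, f (v i))⁻¹ • ∑ i ∈ s, h (v i)

/-- The antithetic multilevel correction `Δψ̃`: the ratio estimator of the full sample minus the
average of the ratio estimators of the two subsamples into which the predicate `p` splits it. -/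
noncomputable def antitheticCorrection [Fintype ι] (f : V → ℝ) (h : V → E) (p : ι → Prop)
    [DecidablePred p] (v : ι → V) : E :=
  ratioEstimator f h Finset.univ v - (1 / 2 : ℝ) •
    (ratioEstimator f h {i | p i} v + ratioEstimator f h {i | ¬ p i} v)

lemma ratioEstimator_smul_smul (c d : ℝ) (f : V → ℝ) (h : V → E) (s : Finset ι) (v : ι → V) :
    ratioEstimator (c • f) (d • h) s v = (c⁻¹ * d) • ratioEstimator f h s v := by
  simp only [ratioEstimator, Pi.smul_apply, smul_eq_mul, ← Finset.mul_sum, ← Finset.smul_sum,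
    mul_inv, smul_smul]
  ring_nf

lemma map_ratioEstimator (L : E →ₗ[ℝ] F) (f : V → ℝ) (h : V → E) (s : Finset ι) (v : ι → V) :
    L (ratioEstimator f h s v) = ratioEstimator f (L ∘ h) s v := by
  simp only [ratioEstimator, map_smul, map_sum, Function.comp_apply]

lemma ratioEstimator_eq_expect_div_expect (f φ : V → ℝ) {s : Finset ι} (hs : s.Nonempty)
    (v : ι → V) : ratioEstimator f φ s v = (𝔼 i ∈ s, φ (v i)) / 𝔼 i ∈ s, f (v i) := by
  have hcard : (s.card : ℝ) ≠ 0 := by exact_mod_cast hs.card_pos.ne'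
  rw [ratioEstimator, Finset.expect_eq_sum_div_card, Finset.expect_eq_sum_div_card,
    div_div_div_cancel_right₀ hcard, smul_eq_mul, inv_mul_eq_div]

variable [Fintype ι] {p : ι → Prop} [DecidablePred p]

lemma antitheticCorrection_smul_smul (c d : ℝ) (f : V → ℝ) (h : V → E) (v : ι → V) :
    antitheticCorrection (c • f) (d • h) p v = (c⁻¹ * d) • antitheticCorrection f h p v := by
  simp only [antitheticCorrection, ratioEstimator_smul_smul, smul_sub, smul_add, smul_smul]
  ring_nf

lemma map_antitheticCorrection (L : E →ₗ[ℝ] F) (f : V → ℝ) (h : V → E) (v : ι → V) :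
    L (antitheticCorrection f h p v) = antitheticCorrection f (L ∘ h) p v := by
  simp only [antitheticCorrection, map_sub, map_add, map_smul, map_ratioEstimator]

lemma antitheticCorrection_eq_expect {N : ℕ} (hN : N ≠ 0)
    (hp : (Finset.univ.filter p).card = N) (hp' : (Finset.univ.filter (¬ p ·)).card = N)
    (f φ : V → ℝ) (v : ι → V) :
    antitheticCorrection f φ p v =
      ((𝔼 i with p i, φ (v i)) + 𝔼 i with ¬ p i, φ (v i)) /
          ((𝔼 i with p i, f (v i)) + 𝔼 i with ¬ p i, f (v i)) -
        1 / 2 * ((𝔼 i with p i, φ (v i)) / (𝔼 i with p i, f (v i)) +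
          (𝔼 i with ¬ p i, φ (v i)) / 𝔼 i with ¬ p i, f (v i)) := by
  have hadd (x : ι → ℝ) : (𝔼 i with p i, x i) + (𝔼 i with ¬ p i, x i) = (∑ i, x i) / N := by
    rw [Finset.expect_eq_sum_div_card, Finset.expect_eq_sum_div_card, hp, hp', ← add_div,
      Finset.sum_filter_add_sum_filter_not]
  have hs : (Finset.univ.filter p).Nonempty := Finset.card_pos.1 (by lia)
  have hs' : (Finset.univ.filter (¬ p ·)).Nonempty := Finset.card_pos.1 (by lia)
  rw [hadd, hadd, div_div_div_cancel_right₀ (Nat.cast_ne_zero.2 hN), antitheticCorrection,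
    ratioEstimator_eq_expect_div_expect f φ hs, ratioEstimator_eq_expect_div_expect f φ hs',
    ratioEstimator, smul_eq_mul, smul_eq_mul, inv_mul_eq_div]

lemma sq_antitheticCorrection_le_sum_rpow {N : ℕ} (hN : N ≠ 0)
    (hp : (Finset.univ.filter p).card = N) (hp' : (Finset.univ.filter (¬ p ·)).card = N)
    {q ρ : ℝ} (hq₀ : 0 ≤ q) (hq : q ≤ 4) (hρ : |ρ| ≤ 1) {f φ : V → ℝ} (hf : ∀ v, 0 < f v)
    (hφ : ∀ v, |φ v| ≤ f v) (v : ι → V) :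
    antitheticCorrection f φ p v ^ 2 ≤ 3 ^ q *
      ((|(𝔼 i with p i, φ (v i)) - ρ| ^ q + |(𝔼 i with ¬ p i, φ (v i)) - ρ| ^ q) +
        (|(𝔼 i with p i, f (v i)) - 1| ^ q + |(𝔼 i with ¬ p i, f (v i)) - 1| ^ q)) := by
  have hpos {s : Finset ι} (hs : s.card = N) : 0 < 𝔼 i ∈ s, f (v i) :=
    Finset.expect_pos (fun i _ => hf (v i)) (Finset.card_pos.1 (by lia))
  have hle (s : Finset ι) : |𝔼 i ∈ s, φ (v i)| ≤ 𝔼 i ∈ s, f (v i) :=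
    (Finset.abs_expect_le s _).trans (Finset.expect_le_expect fun i _ => hφ (v i))
  rw [antitheticCorrection_eq_expect hN hp hp']
  exact sq_antithetic_le_sum_rpow hq₀ hq (hpos hp) (hpos hp') (hle _) (hle _) hρ

end AntitheticCorrection

section SecondMoment

/-- The constant of the second moment bounds for antithetic corrections. -/
noncomputable def correctionConst (q : ℝ) : ℝ := 4 * 3 ^ q * sampleMeanConst q

lemma correctionConst_nonneg (q : ℝ) : 0 ≤ correctionConst q :=
  mul_nonneg (by positivity) (sampleMeanConst_nonneg q)

lemma integral_pos_of_pos {V : Type*} [MeasurableSpace V] {μ : Measure V} [NeZero μ]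
    {f : V → ℝ} (hf₀ : ∀ v, 0 < f v) (hf : Integrable f μ) :
    0 < ∫ v, f v ∂μ := by
  have hsupp : Function.support f = Set.univ := Set.eq_univ_of_forall fun v => (hf₀ v).ne'
  rw [integral_pos_iff_support_of_nonneg (fun v => (hf₀ v).le) hf, hsupp]
  exact NeZero.pos _

variable {V ι : Type*} [MeasurableSpace V] {μ : Measure V} [IsProbabilityMeasure μ] [Fintype ι]
  {p : ι → Prop} [DecidablePred p] {N : ℕ} {q K : ℝ} {f φ : V → ℝ}

lemma aemeasurable_sum_eval (hφ : AEMeasurable φ μ) (s : Finset ι) :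
    AEMeasurable (fun v : ι → V => ∑ i ∈ s, φ (v i)) (Measure.pi fun _ => μ) :=
  Finset.aemeasurable_fun_sum s fun i _ =>
    hφ.comp_quasiMeasurePreserving (measurePreserving_eval (fun _ => μ) i).quasiMeasurePreserving

lemma aemeasurable_antitheticCorrection (hf : AEMeasurable f μ) (hφ : AEMeasurable φ μ) :
    AEMeasurable (antitheticCorrection f φ p) (Measure.pi fun _ : ι => μ) := by
  have hratio (s : Finset ι) : AEMeasurable (ratioEstimator f φ s) (Measure.pi fun _ => μ) :=
    (aemeasurable_sum_eval hf s).inv.mul (aemeasurable_sum_eval hφ s)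
  exact (hratio _).sub (((hratio _).add (hratio _)).const_mul _)

lemma integral_sum_abs_expect_sub_rpow_le_of_abs_le {s s' : Finset ι} (hN : N ≠ 0)
    (hs : s.card = N) (hs' : s'.card = N) (hq : 2 ≤ q) (hφ : MemLp φ (ENNReal.ofReal q) μ)
    (hf : MemLp f (ENNReal.ofReal q) μ) (hφf : ∀ v, |φ v| ≤ |f v|) :
    ∫ v : ι → V, (|(𝔼 i ∈ s, φ (v i)) - ∫ x, φ x ∂μ| ^ q +
        |(𝔼 i ∈ s', φ (v i)) - ∫ x, φ x ∂μ| ^ q) ∂(Measure.pi fun _ => μ) ≤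
      2 * (sampleMeanConst q * (N : ℝ) ^ (-(q / 2)) * ∫ x, |f x| ^ q ∂μ) := by
  have hq₀ : 0 < q := by linarith
  have hC := sampleMeanConst_nonneg q
  have hmoment : ∫ x, |φ x| ^ q ∂μ ≤ ∫ x, |f x| ^ q ∂μ :=
    integral_mono (integrable_abs_rpow_of_memLp hq₀ hφ) (integrable_abs_rpow_of_memLp hq₀ hf)
      fun x => Real.rpow_le_rpow (abs_nonneg _) (hφf x) hq₀.le
  have hmean {t : Finset ι} (ht : t.card = N) :
      ∫ v : ι → V, |(𝔼 i ∈ t, φ (v i)) - ∫ x, φ x ∂μ| ^ q ∂(Measure.pi fun _ => μ) ≤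
        sampleMeanConst q * (N : ℝ) ^ (-(q / 2)) * ∫ x, |f x| ^ q ∂μ := by
    subst ht
    exact (integral_abs_expect_sub_integral_rpow_le hq hφ
      (Finset.card_pos.1 (Nat.pos_of_ne_zero hN))).trans (by gcongr)
  rw [integral_add (integrable_abs_expect_sub_rpow hq₀ hφ s _)
    (integrable_abs_expect_sub_rpow hq₀ hφ s' _), two_mul]
  exact add_le_add (hmean hs) (hmean hs')

lemma lintegral_sq_antitheticCorrection_le_of_integral_eq_one (hN : N ≠ 0)
    (hp : (Finset.univ.filter p).card = N) (hp' : (Finset.univ.filter (¬ p ·)).card = N)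
    (hq : 2 ≤ q) (hq' : q ≤ 4) (hf₀ : ∀ v, 0 < f v) (hf₁ : ∫ v, f v ∂μ = 1)
    (hf : MemLp f (ENNReal.ofReal q) μ) (hφ : AEStronglyMeasurable φ μ) (hφf : ∀ v, |φ v| ≤ f v) :
    ∫⁻ v : ι → V, ENNReal.ofReal (antitheticCorrection f φ p v ^ 2) ∂(Measure.pi fun _ => μ) ≤
      ENNReal.ofReal (correctionConst q * (N : ℝ) ^ (-(q / 2)) * ∫ v, |f v| ^ q ∂μ) := by
  have hq₀ : 0 < q := by linarith
  have hφf' (v : V) : |φ v| ≤ |f v| := (hφf v).trans (le_abs_self _)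
  have hφq : MemLp φ (ENNReal.ofReal q) μ := hf.of_le hφ (.of_forall hφf')
  have hρ : |∫ v, φ v ∂μ| ≤ 1 := by
    rw [← hf₁, ← Real.norm_eq_abs]
    exact norm_integral_le_of_norm_le (integrable_of_memLp_ofReal (by linarith) hf)
      (.of_forall hφf)
  set ρ := ∫ v, φ v ∂μ
  set B := 2 * (sampleMeanConst q * (N : ℝ) ^ (-(q / 2)) * ∫ v, |f v| ^ q ∂μ) with hB
  let D (ψ : V → ℝ) (c : ℝ) (v : ι → V) : ℝ :=
    |(𝔼 i with p i, ψ (v i)) - c| ^ q + |(𝔼 i with ¬ p i, ψ (v i)) - c| ^ q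
  have hD {ψ : V → ℝ} (hψ : MemLp ψ (ENNReal.ofReal q) μ) (c : ℝ) :
      Integrable (D ψ c) (Measure.pi fun _ => μ) :=
    (integrable_abs_expect_sub_rpow hq₀ hψ _ c).add (integrable_abs_expect_sub_rpow hq₀ hψ _ c)
  have hDf : ∫ v, D f 1 v ∂(Measure.pi fun _ => μ) ≤ B :=
    hf₁ ▸ integral_sum_abs_expect_sub_rpow_le_of_abs_le hN hp hp' hq hf hf fun _ => le_rfl
  have hDφ : ∫ v, D φ ρ v ∂(Measure.pi fun _ => μ) ≤ B :=
    integral_sum_abs_expect_sub_rpow_le_of_abs_le hN hp hp' hq hφq hf hφf'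
  have hDI : Integrable (fun v => 3 ^ q * (D φ ρ v + D f 1 v)) (Measure.pi fun _ => μ) :=
    ((hD hφq ρ).add (hD hf 1)).const_mul _
  calc ∫⁻ v : ι → V, ENNReal.ofReal (antitheticCorrection f φ p v ^ 2) ∂(Measure.pi fun _ => μ)
      ≤ ∫⁻ v, ENNReal.ofReal (3 ^ q * (D φ ρ v + D f 1 v)) ∂(Measure.pi fun _ => μ) :=
        lintegral_mono fun v => ENNReal.ofReal_le_ofReal
          (sq_antitheticCorrection_le_sum_rpow hN hp hp' hq₀.le hq' hρ hf₀ hφf v)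
    _ = ENNReal.ofReal (3 ^ q * (∫ v, D φ ρ v ∂(Measure.pi fun _ => μ) +
          ∫ v, D f 1 v ∂(Measure.pi fun _ => μ))) := by
        rw [← ofReal_integral_eq_lintegral_ofReal hDI
          (.of_forall fun v => by positivity), integral_const_mul,
          integral_add (hD hφq ρ) (hD hf 1)]
    _ ≤ ENNReal.ofReal (3 ^ q * (B + B)) := by gcongr
    _ = ENNReal.ofReal (correctionConst q * (N : ℝ) ^ (-(q / 2)) * ∫ v, |f v| ^ q ∂μ) := by
        rw [hB, correctionConst]
        ring_nf

lemma lintegral_sq_antitheticCorrection_le (hN : N ≠ 0)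
    (hp : (Finset.univ.filter p).card = N) (hp' : (Finset.univ.filter (¬ p ·)).card = N)
    (hq : 2 ≤ q) (hq' : q ≤ 4) (hf₀ : ∀ v, 0 < f v) (hf : MemLp f (ENNReal.ofReal q) μ)
    (hφ : AEStronglyMeasurable φ μ) (hK : 0 < K) (hφf : ∀ v, |φ v| ≤ K * f v) :
    ∫⁻ v : ι → V, ENNReal.ofReal (antitheticCorrection f φ p v ^ 2) ∂(Measure.pi fun _ => μ) ≤
      ENNReal.ofReal (K ^ 2 * (correctionConst q * (N : ℝ) ^ (-(q / 2)) *
        ∫ v, |f v / ∫ x, f x ∂μ| ^ q ∂μ)) := by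
  set m := ∫ v, f v ∂μ with hm
  have hm₀ : 0 < m := integral_pos_of_pos hf₀ (integrable_of_memLp_ofReal (by linarith) hf)
  have hscale (v : ι → V) : antitheticCorrection f φ p v =
      K * antitheticCorrection (m⁻¹ • f) ((m⁻¹ * K⁻¹) • φ) p v := by
    rw [antitheticCorrection_smul_smul, smul_eq_mul]
    field_simp
  have hdiv : (fun v => f v / m) = m⁻¹ • f := funext fun v => div_eq_inv_mul _ _
  have hnormalized := lintegral_sq_antitheticCorrection_le_of_integral_eq_one
    (f := m⁻¹ • f) (φ := (m⁻¹ * K⁻¹) • φ) hN hp hp' hq hq'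
    (fun v => mul_pos (inv_pos.2 hm₀) (hf₀ v))
    (by rw [← hdiv, integral_div, ← hm, div_self hm₀.ne'])
    (hf.const_smul _) (hφ.const_smul _) fun v => by
      rw [Pi.smul_apply, Pi.smul_apply, smul_eq_mul, smul_eq_mul, abs_mul,
        abs_of_pos (by positivity), mul_assoc]
      gcongr
      exact (inv_mul_le_iff₀ hK).2 (hφf v)
  simp only [hscale, mul_pow, ENNReal.ofReal_mul (sq_nonneg K)]
  rw [lintegral_const_mul' _ _ ENNReal.ofReal_ne_top]
  gcongr
  simpa only [← hdiv] using hnormalized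

variable {m n : Type*} [Fintype m] [Fintype n]

lemma lintegral_sum_sq_mulVec_antitheticCorrection_le (hN : N ≠ 0)
    (hp : (Finset.univ.filter p).card = N) (hp' : (Finset.univ.filter (¬ p ·)).card = N)
    (hq : 2 ≤ q) (hq' : q ≤ 4) (hf₀ : ∀ v, 0 < f v) (hf : MemLp f (ENNReal.ofReal q) μ)
    {h : V → n → ℝ} (hh : AEStronglyMeasurable h μ) {J : Matrix m n ℝ} (hK : 0 < K)
    (hJh : ∀ v, ‖J *ᵥ ((f v)⁻¹ • h v)‖ ≤ K) :
    ∫⁻ v : ι → V, ENNReal.ofReal (∑ j, (J *ᵥ antitheticCorrection f h p v) j ^ 2)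
        ∂(Measure.pi fun _ => μ) ≤
      ENNReal.ofReal (Fintype.card m * K ^ 2 * correctionConst q * (N : ℝ) ^ (-(q / 2)) *
        ∫ v, |f v / ∫ x, f x ∂μ| ^ q ∂μ) := by
  have hcoord (v : ι → V) (j : m) : (J *ᵥ antitheticCorrection f h p v) j =
      antitheticCorrection f (fun x => (J *ᵥ h x) j) p v :=
    map_antitheticCorrection (LinearMap.proj j ∘ₗ J.mulVecLin) f h v
  have hφ (j : m) : AEStronglyMeasurable (fun x => (J *ᵥ h x) j) μ :=
    ((continuous_apply j).comp (Continuous.matrix_mulVec continuous_const continuous_id)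
      ).comp_aestronglyMeasurable hh
  have hφf (j : m) (v : V) : |(J *ᵥ h v) j| ≤ K * f v := by
    have hj : ‖(J *ᵥ ((f v)⁻¹ • h v)) j‖ ≤ K := (norm_le_pi_norm _ j).trans (hJh v)
    rwa [Matrix.mulVec_smul, Pi.smul_apply, norm_smul, norm_inv, Real.norm_of_nonneg (hf₀ v).le,
      inv_mul_le_iff₀ (hf₀ v), mul_comm] at hj
  simp only [hcoord, ENNReal.ofReal_sum_of_nonneg fun _ _ => sq_nonneg _]
  rw [lintegral_finsetSum' _ fun j _ =>
    ((aemeasurable_antitheticCorrection hf.1.aemeasurable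
      (hφ j).aemeasurable).pow_const 2).ennreal_ofReal]
  calc _ ≤ ∑ _j : m, ENNReal.ofReal (K ^ 2 * (correctionConst q * (N : ℝ) ^ (-(q / 2)) *
          ∫ v, |f v / ∫ x, f x ∂μ| ^ q ∂μ)) := Finset.sum_le_sum fun j _ =>
        lintegral_sq_antitheticCorrection_le hN hp hp' hq hq' hf₀ hf (hφ j) hK (hφf j)
    _ = _ := by
        rw [Finset.sum_const, Finset.card_univ, ← ENNReal.ofReal_nsmul, nsmul_eq_mul]
        simp only [mul_assoc]

end SecondMoment

section Levels

lemma card_filter_val_lt_half (M ℓ : ℕ) :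
    (Finset.univ.filter fun i : Fin (M * 2 ^ ℓ) => (i : ℕ) < M * 2 ^ (ℓ - 1)).card =
      M * 2 ^ (ℓ - 1) := by
  rw [Fin.card_filter_val_lt, min_eq_right]
  gcongr
  · exact one_le_two
  · exact Nat.sub_le ℓ 1

lemma card_filter_not_val_lt_half (M : ℕ) {ℓ : ℕ} (hℓ : 1 ≤ ℓ) :
    (Finset.univ.filter fun i : Fin (M * 2 ^ ℓ) => ¬ (i : ℕ) < M * 2 ^ (ℓ - 1)).card =
      M * 2 ^ (ℓ - 1) := by
  have htotal := Finset.card_filter_add_card_filter_not (s := Finset.univ)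
    fun i : Fin (M * 2 ^ ℓ) => (i : ℕ) < M * 2 ^ (ℓ - 1)
  have hdouble : M * 2 ^ ℓ = M * 2 ^ (ℓ - 1) + M * 2 ^ (ℓ - 1) := by
    rw [← mul_add, ← two_mul, mul_pow_sub_one (by lia)]
  rw [card_filter_val_lt_half, Finset.card_univ, Fintype.card_fin] at htotal
  lia

lemma natCast_mul_two_pow_rpow_neg_le {s : ℝ} (hs : 0 ≤ s) {M ℓ : ℕ} (hM : 1 ≤ M) (hℓ : 1 ≤ ℓ) :
    ((M * 2 ^ (ℓ - 1) : ℕ) : ℝ) ^ (-s) ≤ 2 ^ s * 2 ^ (-s * ℓ) := by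
  calc ((M * 2 ^ (ℓ - 1) : ℕ) : ℝ) ^ (-s) ≤ (2 ^ (ℓ - 1) : ℝ) ^ (-s) := by
        refine Real.rpow_le_rpow_of_nonpos (by positivity) ?_ (by linarith)
        exact_mod_cast Nat.le_mul_of_pos_left _ hM
    _ = 2 ^ s * 2 ^ (-s * ℓ) := by
        rw [← Real.rpow_natCast, ← Real.rpow_mul zero_le_two, ← Real.rpow_add two_pos,
          Nat.cast_sub hℓ]
        push_cast
        ring_nf

variable {U V ι m n : Type*} [MeasurableSpace U] [MeasurableSpace V] {μU : Measure U}
  [IsFiniteMeasure μU] {μV : Measure V} [IsProbabilityMeasure μV] [Fintype ι] [Fintype m]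
  [Fintype n]

lemma lintegral_lintegral_sum_sq_mulVec_antitheticCorrection_le {pred : ι → Prop}
    [DecidablePred pred] {N : ℕ} (hN : N ≠ 0) (hpred : (Finset.univ.filter pred).card = N)
    (hpred' : (Finset.univ.filter (¬ pred ·)).card = N)
    {f : U → V → ℝ} (hf₀ : ∀ u v, 0 < f u v) (hf : ∀ u, Integrable (f u) μV)
    {h : U → V → n → ℝ} (hh : ∀ u, AEStronglyMeasurable (h u) μV) {J : U → Matrix m n ℝ}
    {K : ℝ} (hK : 0 < K) (hJh : ∀ u v, ‖J u *ᵥ ((f u v)⁻¹ • h u v)‖ ≤ K)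
    {p q : ℝ} (hq : 2 ≤ q) (hq' : q ≤ 4) (hqp : q ≤ p)
    (hmom : Integrable (fun z : U × V => |f z.1 z.2 / ∫ v, f z.1 v ∂μV| ^ p) (μU.prod μV)) :
    ∫⁻ u, ∫⁻ v : ι → V,
        ENNReal.ofReal (∑ j, (J u *ᵥ antitheticCorrection (f u) (h u) pred v) j ^ 2)
        ∂(Measure.pi fun _ => μV) ∂μU ≤
      ENNReal.ofReal (Fintype.card m * K ^ 2 * correctionConst q * (N : ℝ) ^ (-(q / 2)) *
        ∫ u, (1 + ∫ v, |f u v / ∫ x, f u x ∂μV| ^ p ∂μV) ∂μU) := by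
  have hC := correctionConst_nonneg q
  set A := Fintype.card m * K ^ 2 * correctionConst q * (N : ℝ) ^ (-(q / 2))
  have hbound : Integrable (fun u => A * (1 + ∫ v, |f u v / ∫ x, f u x ∂μV| ^ p ∂μV)) μU :=
    ((integrable_const 1).add hmom.integral_prod_left).const_mul A
  rw [← integral_const_mul, ofReal_integral_eq_lintegral_ofReal hbound
    (.of_forall fun u => by simp only [Pi.zero_apply]; positivity)]
  refine lintegral_mono_ae ?_
  filter_upwards [hmom.prod_right_ae] with u hu
  set c := ∫ v, f u v ∂μV
  have hc : c ≠ 0 := (integral_pos_of_pos (hf₀ u) (hf u)).ne'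
  have hw : MemLp (fun v => f u v / c) (ENNReal.ofReal p) μV :=
    (memLp_ofReal_iff_integrable_abs_rpow (by linarith) ((hf u).div_const c).1).2 hu
  have hfq : MemLp (f u) (ENNReal.ofReal q) μV := by
    simpa only [mul_div_cancel₀ _ hc] using
      (hw.mono_exponent (ENNReal.ofReal_le_ofReal hqp)).const_mul c
  refine (lintegral_sum_sq_mulVec_antitheticCorrection_le hN hpred hpred' hq hq' (hf₀ u) hfq
    (hh u) hK (hJh u)).trans (ENNReal.ofReal_le_ofReal ?_)
  gcongr
  exact integral_abs_rpow_le_one_add (by linarith) hqp hu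

end Levels

theorem stmt_2_general {U V m n : Type*} [MeasurableSpace U] [MeasurableSpace V] [Fintype m]
    [Fintype n] (μU : Measure U) [IsFiniteMeasure μU] (μV : Measure V) [IsProbabilityMeasure μV]
    (f : U → V → ℝ) (h : U → V → n → ℝ) (J : U → Matrix m n ℝ)
    (hf_pos : ∀ u v, 0 < f u v) (hf : ∀ u, Integrable (f u) μV)
    (hh : ∀ u, AEStronglyMeasurable (h u) μV) (M₀ : ℕ) (hM₀ : 1 ≤ M₀)
    (hbound : ∃ K : ℝ, ∀ u v, ‖J u *ᵥ ((f u v)⁻¹ • h u v)‖ ≤ K) (p : ℝ) (hp : 2 ≤ p)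
    (hmom : Integrable (fun z : U × V => |f z.1 z.2 / ∫ v, f z.1 v ∂μV| ^ p) (μU.prod μV)) :
    ∃ C : ℝ, 0 < C ∧ ∀ ℓ : ℕ, 1 ≤ ℓ →
      ∫⁻ u, ∫⁻ v : Fin (M₀ * 2 ^ ℓ) → V, ENNReal.ofReal (∑ j, (J u *ᵥ
          antitheticCorrection (f u) (h u) (fun i => i.val < M₀ * 2 ^ (ℓ - 1)) v) j ^ 2)
        ∂(Measure.pi fun _ => μV) ∂μU ≤
      ENNReal.ofReal (C * (2 : ℝ) ^ (-(min (p / 2) 2) * ℓ)) := by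
  obtain ⟨K, hK⟩ := hbound
  set q := min p 4 with hq
  have hq₂ : 2 ≤ q := le_min hp (by norm_num)
  have hrate : min (p / 2) 2 = q / 2 := by
    rw [hq, ← min_div_div_right zero_le_two]
    norm_num
  have hC := correctionConst_nonneg q
  set A := Fintype.card m * max K 1 ^ 2 * correctionConst q
  set I := ∫ u, (1 + ∫ v, |f u v / ∫ x, f u x ∂μV| ^ p ∂μV) ∂μU
  refine ⟨A * 2 ^ (q / 2) * I + 1, by positivity, fun ℓ hℓ => ?_⟩
  refine (lintegral_lintegral_sum_sq_mulVec_antitheticCorrection_le (K := max K 1)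
    (by positivity) (card_filter_val_lt_half M₀ ℓ) (card_filter_not_val_lt_half M₀ hℓ) hf_pos hf hh
    (by positivity) (fun u v => (hK u v).trans (le_max_left K 1)) hq₂ (min_le_right p 4)
    (min_le_left p 4) hmom).trans (ENNReal.ofReal_le_ofReal ?_)
  calc A * ((M₀ * 2 ^ (ℓ - 1) : ℕ) : ℝ) ^ (-(q / 2)) * I
      ≤ A * (2 ^ (q / 2) * 2 ^ (-(q / 2) * ℓ)) * I := by
        gcongr
        exact natCast_mul_two_pow_rpow_neg_le (by linarith) hM₀ hℓ
    _ = A * 2 ^ (q / 2) * I * 2 ^ (-(q / 2) * ℓ) := by ring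
    _ ≤ (A * 2 ^ (q / 2) * I + 1) * 2 ^ (-(min (p / 2) 2) * ℓ) := by
        rw [hrate]
        gcongr
        exact le_add_of_nonneg_right zero_le_one

/-- MC convergence rate of the antithetic MLMC correction for the
re-parameterization gradient: if the λ-gradient of `log f`, i.e.
`J(u)·h(v,θ(u))/f(v,θ(u))`, is uniformly bounded in max-norm and
`E[|f(v,θ)/μ(θ)|^p] < ∞` for some `p > 2`, then
`E[‖J(u)·Δψ̃_{θ,ℓ}‖₂²] = O(2^{−rℓ})` with `r = min(p/2, 2)`.  Here
`θ = θ(u)` with `u ∼ μU`, the inner samples `v_1, …, v_{M_ℓ}` are iid `∼ μV`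
(modeled by the product measure), `ψ̃` is the ratio-of-means
`(Σ h(v_i,θ))/(Σ f(v_i,θ))`, and `Δψ̃_{θ,ℓ}` is the antithetic correction
built from the full sample and its two halves. -/
theorem stmt_2 {U V Θ : Type*} [MeasurableSpace U] [MeasurableSpace V]
    (μU : Measure U) [IsProbabilityMeasure μU]
    (μV : Measure V) [IsProbabilityMeasure μV]
    (θmap : U → Θ) (pdim ddim : ℕ)
    (f : V → Θ → ℝ) (h : V → Θ → Fin pdim → ℝ)
    (J : U → Matrix (Fin ddim) (Fin pdim) ℝ)
    (hf_meas : Measurable fun z : U × V => f z.2 (θmap z.1))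
    (hh_meas : Measurable fun z : U × V => h z.2 (θmap z.1))
    (hJ_meas : ∀ i j, Measurable fun u => J u i j)
    (hf_pos : ∀ v ϑ, 0 < f v ϑ)
    (hμ : ∀ u, Integrable (fun v => f v (θmap u)) μV ∧
      0 < ∫ v, f v (θmap u) ∂μV)
    (M₀ : ℕ) (hM₀ : 1 ≤ M₀)
    (hbound : ∃ K : ℝ, ∀ u v,
      ‖(J u).mulVec ((f v (θmap u))⁻¹ • h v (θmap u))‖ ≤ K)
    (p : ℝ) (hp : 2 < p)
    (hmom : Integrable
      (fun z : U × V => |f z.2 (θmap z.1) / ∫ v, f v (θmap z.1) ∂μV| ^ p)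
      (μU.prod μV)) :
    ∃ C : ℝ, 0 < C ∧ ∀ ℓ : ℕ, 1 ≤ ℓ →
      ∫⁻ u, ∫⁻ v : Fin (M₀ * 2 ^ ℓ) → V,
          ENNReal.ofReal (∑ j : Fin ddim,
            ((J u).mulVec
              ((∑ i, f (v i) (θmap u))⁻¹ • (∑ i, h (v i) (θmap u))
                - (1 / 2 : ℝ) •
                  (((∑ i ∈ Finset.univ.filter
                        (fun i : Fin (M₀ * 2 ^ ℓ) => (i : ℕ) < M₀ * 2 ^ (ℓ - 1)),
                      f (v i) (θmap u))⁻¹ •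
                    (∑ i ∈ Finset.univ.filter
                        (fun i : Fin (M₀ * 2 ^ ℓ) => (i : ℕ) < M₀ * 2 ^ (ℓ - 1)),
                      h (v i) (θmap u)))
                  + ((∑ i ∈ Finset.univ.filter
                        (fun i : Fin (M₀ * 2 ^ ℓ) => ¬ (i : ℕ) < M₀ * 2 ^ (ℓ - 1)),
                      f (v i) (θmap u))⁻¹ •
                    (∑ i ∈ Finset.univ.filter
                        (fun i : Fin (M₀ * 2 ^ ℓ) => ¬ (i : ℕ) < M₀ * 2 ^ (ℓ - 1)),
                      h (v i) (θmap u)))))) j ^ 2)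
        ∂(Measure.pi fun _ => μV) ∂μU
      ≤ ENNReal.ofReal (C * (2 : ℝ) ^ (-(min (p / 2) 2) * ℓ)) := by
  exact stmt_2_general μU μV (fun u v => f v (θmap u)) (fun u v => h v (θmap u)) J
    (fun u v => hf_pos v (θmap u)) (fun u => (hμ u).1)
    (fun u => (hh_meas.comp measurable_prodMk_left).aestronglyMeasurable) M₀ hM₀ hbound p hp.le hmom
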